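/- Let X be a complex separable infinite-dimensional Banach space and let T be a bounded linear operator on X. If T is hypercyclic and satisfies assumption (H), then T is frequently hypercyclic. -/

import Mathlib

open MeasureTheory Filter Topology

open scoped Classical in
/-- Lower density of a set of natural numbers. -/
noncomputable def lowerDensity (A : Set ℕ) : ℝ :=
  Filter.atTop.liminf fun N : ℕ =>
    (((Finset.range N).filter (fun n => n ∈ A)).card : ℝ) / (N : ℝ)

/-- `x` is a frequently hypercyclic vector for `T`. -/
def FreqHCVector {X : Type*} [NormedAddCommGroup X] [NormedSpace ℂ X]
    (T : X →L[ℂ] X) (x : X) : Prop :=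
  ∀ U : Set X, IsOpen U → U.Nonempty → 0 < lowerDensity {n : ℕ | (T ^ n) x ∈ U}

/-- `T` is frequently hypercyclic. -/
def FrequentlyHypercyclic {X : Type*} [NormedAddCommGroup X] [NormedSpace ℂ X]
    (T : X →L[ℂ] X) : Prop :=
  ∃ x : X, FreqHCVector T x

/-- `T` is hypercyclic. -/
def Hypercyclic {X : Type*} [NormedAddCommGroup X] [NormedSpace ℂ X]
    (T : X →L[ℂ] X) : Prop :=
  ∃ x : X, Dense (Set.range fun n : ℕ => (T ^ n) x)

/-- `T` has a perfectly spanning set of eigenvectors associated to unimodular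
eigenvalues: there is a continuous (atomless) probability measure `σ` on the unit
circle such that whenever `A` is a measurable subset of the circle with `σ A = 1`,
the span of the eigenspaces `ker (T - c)`, `c ∈ A`, is dense in `X`. -/
def PerfectlySpanning {X : Type*} [NormedAddCommGroup X] [NormedSpace ℂ X]
    (T : X →L[ℂ] X) : Prop :=
  ∃ σ : Measure ℂ, IsProbabilityMeasure σ ∧ (∀ c : ℂ, σ {c} = 0) ∧
    σ {c : ℂ | ‖c‖ = 1} = 1 ∧
    ∀ A : Set ℂ, A ⊆ {c : ℂ | ‖c‖ = 1} → MeasurableSet A → σ A = 1 →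
      Dense (Submodule.span ℂ (⋃ c ∈ A, {x : X | T x = c • x}) : Set X)

/-!
A vector `x` near which there are eigenvectors for infinitely many unimodular eigenvalues is
approximated by averages of `N` such eigenvectors with distinct eigenvalues. The orbit of such an
average stays near `x` scaled by `N⁻¹ ∑ cⁿ`, and by orthogonality of characters these factors have
asymptotic mean modulus at most `N ^ (-1/2)`. Consequently, when such `x` span a dense subspace,
every vector is a limit of combinations of eigenvectors whose orbits are small on average.

Combinations of eigenvectors return near themselves along Bohr sets, which have positive lower
density. Given such a combination `v` and a target `u`, choose `z` near `u - v` with small orbit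
mean; a maximal inequality provides a Bohr return time `s` of `v` for which *all* the averages along
the orbit of `T ^ s z` are small. Then `v + T ^ s z` visits a given neighbourhood of `u` with
positive lower density, and by Markov's inequality a further perturbation whose orbit averages are
small enough preserves this. Iterating over a dense sequence of targets gives a convergent series
whose sum is frequently hypercyclic.
-/

section LowerDensity

open scoped Classical in
lemma le_lowerDensity {A : Set ℕ} {d : ℝ}
    (h : ∀ᶠ N : ℕ in atTop, d * N ≤ Nat.count (· ∈ A) N) : d ≤ lowerDensity A := by
  simp only [lowerDensity, ← Nat.count_eq_card_filter_range]
  have le_one (N : ℕ) : (Nat.count (· ∈ A) N : ℝ) / N ≤ 1 :=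
    div_le_one_of_le₀ (mod_cast Nat.count_le _) N.cast_nonneg
  refine le_liminf_of_le (isBoundedUnder_of ⟨1, le_one⟩).isCoboundedUnder_ge ?_
  filter_upwards [h, eventually_gt_atTop 0] with N hN hN_pos
  rwa [le_div_iff₀ (mod_cast hN_pos)]

open scoped Classical in
lemma eventually_mul_le_count_of_lt_lowerDensity {A : Set ℕ} {d : ℝ} (h : d < lowerDensity A) :
    ∀ᶠ N : ℕ in atTop, d * N ≤ Nat.count (· ∈ A) N := by
  simp only [lowerDensity, ← Nat.count_eq_card_filter_range] at h
  have nonneg (N : ℕ) : 0 ≤ (Nat.count (· ∈ A) N : ℝ) / N := by positivity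
  filter_upwards [eventually_lt_of_lt_liminf h (isBoundedUnder_of ⟨0, nonneg⟩),
    eventually_gt_atTop 0] with N hN hN_pos
  exact ((lt_div_iff₀ (mod_cast hN_pos)).1 hN).le

lemma lowerDensity_mono {A B : Set ℕ} (h : A ⊆ B) : lowerDensity A ≤ lowerDensity B := by
  classical
  refine le_of_forall_lt_imp_le_of_dense fun d hd => le_lowerDensity ?_
  filter_upwards [eventually_mul_le_count_of_lt_lowerDensity hd] with N hN
  exact hN.trans (mod_cast Nat.count_mono_left fun n _ hn => h hn)

lemma lowerDensity_le_lowerDensity_preimage_add (A : Set ℕ) (s : ℕ) :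
    lowerDensity A ≤ lowerDensity ((· + s) ⁻¹' A) := by
  classical
  refine le_of_forall_lt_imp_le_of_dense fun d hd => le_lowerDensity ?_
  obtain ⟨d', hdd', hd'⟩ := exists_between hd
  have shift_negligible : ∀ᶠ N : ℕ in atTop, s / (d' - d) ≤ (N : ℝ) :=
    tendsto_natCast_atTop_atTop.eventually_ge_atTop _
  filter_upwards [eventually_mul_le_count_of_lt_lowerDensity hd', shift_negligible] with N hN hsN
  have count_le : Nat.count (· ∈ A) N ≤ Nat.count (· ∈ (· + s) ⁻¹' A) N + s := calc
    Nat.count (· ∈ A) N ≤ Nat.count (· ∈ A) (N + s) := Nat.count_monotone _ (N.le_add_right s)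
    _ = Nat.count (· ∈ A) s + Nat.count (· ∈ (· + s) ⁻¹' A) N := by
      simp only [Nat.add_comm N s, Nat.count_add, Set.mem_preimage, Nat.add_comm]
    _ ≤ Nat.count (· ∈ (· + s) ⁻¹' A) N + s := by
      rw [Nat.add_comm]
      exact Nat.add_le_add_left (Nat.count_le _) _
  have count_le' : (Nat.count (· ∈ A) N : ℝ) ≤ Nat.count (· ∈ (· + s) ⁻¹' A) N + s :=
    mod_cast count_le
  rw [div_le_iff₀ (sub_pos.2 hdd')] at hsN
  linarith

open scoped Classical in
lemma mul_count_le_mul_count_add_sum {A B : Set ℕ} {f : ℕ → ℝ} {τ : ℝ} (hf : ∀ n, 0 ≤ f n)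
    (hτ : 0 ≤ τ) (hAB : ∀ n ∈ A, f n < τ → n ∈ B) (N : ℕ) :
    τ * Nat.count (· ∈ A) N ≤ τ * Nat.count (· ∈ B) N + ∑ n ∈ Finset.range N, f n := by
  induction N with
  | zero => simp
  | succ N ih =>
    rw [Nat.count_succ, Nat.count_succ, Finset.sum_range_succ]
    have f_nonneg := hf N
    have le_f (hA : N ∈ A) (hB : N ∉ B) : τ ≤ f N := not_lt.1 fun h => hB (hAB N hA h)
    split_ifs with hA hB hB
    all_goals push_cast
    case neg => linarith [le_f hA hB]
    all_goals linarith

lemma lowerDensity_sub_div_le {A B : Set ℕ} {f : ℕ → ℝ} {ε τ : ℝ} (hf : ∀ n, 0 ≤ f n)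
    (hτ : 0 < τ) (hmean : ∀ᶠ N : ℕ in atTop, ∑ n ∈ Finset.range N, f n ≤ ε * N)
    (hAB : ∀ n ∈ A, f n < τ → n ∈ B) : lowerDensity A - ε / τ ≤ lowerDensity B := by
  classical
  rw [sub_le_iff_le_add]
  refine le_of_forall_lt_imp_le_of_dense fun d hd => sub_le_iff_le_add.1 (le_lowerDensity ?_)
  filter_upwards [eventually_mul_le_count_of_lt_lowerDensity hd, hmean] with N hN hsum
  have markov := (mul_count_le_mul_count_add_sum hf hτ.le hAB N).trans
    (add_le_add_right hsum _)
  refine le_of_mul_le_mul_left ?_ hτ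
  calc τ * ((d - ε / τ) * N) = τ * (d * N) - ε * N := by field_simp
    _ ≤ τ * Nat.count (· ∈ A) N - ε * N := by gcongr
    _ ≤ τ * Nat.count (· ∈ B) N := by linarith

open scoped Classical in
lemma exists_ge_mul_count_le_sum {A : Set ℕ} {f : ℕ → ℝ} {ε : ℝ} (hf : ∀ n, 0 ≤ f n)
    (hε : 0 ≤ ε) (hlarge : ∀ s ∈ A, ∃ N : ℕ, ε * N < ∑ n ∈ Finset.range N, f (s + n)) (K : ℕ) :
    ∃ M ≥ K, ε * Nat.count (· ∈ A) M ≤ ∑ n ∈ Finset.range M, f n := by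
  -- Cut `[0, M)` greedily into blocks: a point of `A` opens a block on which the mean of `f`
  -- exceeds `ε`, any other point is a block by itself.
  induction K with
  | zero => exact ⟨0, le_rfl, by simp⟩
  | succ K ih =>
    obtain ⟨M, hKM, hM⟩ := ih
    by_cases hMA : M ∈ A
    · obtain ⟨N, hN⟩ := hlarge M hMA
      have N_ne_zero : N ≠ 0 := by
        rintro rfl
        simp at hN
      refine ⟨M + N, by lia, ?_⟩
      have count_le : (Nat.count (· ∈ A) (M + N) : ℝ) ≤ Nat.count (· ∈ A) M + N := by
        rw [Nat.count_add]
        exact_mod_cast Nat.add_le_add_left (Nat.count_le _) _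
      calc ε * Nat.count (· ∈ A) (M + N) ≤ ε * (Nat.count (· ∈ A) M + N) := by gcongr
        _ ≤ ∑ n ∈ Finset.range (M + N), f n := by
          rw [Finset.sum_range_add]
          linarith
    · refine ⟨M + 1, by lia, ?_⟩
      rw [Nat.count_succ, if_neg hMA, Nat.add_zero, Finset.sum_range_succ]
      linarith [hf M]

lemma exists_mem_forall_sum_le {A : Set ℕ} {f : ℕ → ℝ} {ε ε' : ℝ} (hf : ∀ n, 0 ≤ f n)
    (hε : 0 < ε) (hεA : ε' < ε * lowerDensity A)
    (hmean : ∀ᶠ M : ℕ in atTop, ∑ n ∈ Finset.range M, f n ≤ ε' * M) :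
    ∃ s ∈ A, ∀ N : ℕ, ∑ n ∈ Finset.range N, f (s + n) ≤ ε * N := by
  classical
  by_contra! hlarge
  obtain ⟨d, hd, hdA⟩ := exists_between ((div_lt_iff₀' hε).2 hεA)
  obtain ⟨M₀, hM₀⟩ := eventually_atTop.1
    ((eventually_mul_le_count_of_lt_lowerDensity hdA).and (hmean.and (eventually_gt_atTop 0)))
  obtain ⟨M, hM₀M, hM⟩ := exists_ge_mul_count_le_sum hf hε.le hlarge M₀
  obtain ⟨hcount, hsum, hM_pos⟩ := hM₀ M hM₀M
  have mul_le_mul_cast : ε * d * M ≤ ε' * M := calc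
    ε * d * M = ε * (d * M) := mul_assoc _ _ _
    _ ≤ ε * Nat.count (· ∈ A) M := by gcongr
    _ ≤ ε' * M := hM.trans hsum
  exact ((div_lt_iff₀' hε).1 hd).not_ge (le_of_mul_le_mul_right mul_le_mul_cast (mod_cast hM_pos))

end LowerDensity

section Bohr

open scoped Classical in
lemma card_le_count_of_forall_sub_mem {A : Set ℕ} {S : Finset ℕ} {N : ℕ}
    (hS : S ⊆ Finset.range N) (hA : ∀ m ∈ S, ∀ n ∈ S, m ≤ n → n - m ∈ A) :
    S.card ≤ Nat.count (· ∈ A) N := by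
  rcases S.eq_empty_or_nonempty with rfl | hne
  · simp
  have min_le (n : ℕ) (hn : n ∈ S) : S.min' hne ≤ n := S.min'_le n hn
  rw [Nat.count_eq_card_filter_range]
  refine Finset.card_le_card_of_injOn (· - S.min' hne) (fun n hn => ?_) fun m hm n hn hmn => ?_
  · have n_lt : n < N := Finset.mem_range.1 (hS hn)
    exact Finset.mem_filter.2 ⟨Finset.mem_range.2 (by lia),
      hA _ (S.min'_mem hne) n hn (min_le n hn)⟩
  · exact (tsub_left_inj (min_le m hm) (min_le n hn)).1 hmn

lemma lowerDensity_pow_mem_pos {G : Type*} [Group G] [TopologicalSpace G] [IsTopologicalGroup G]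
    [CompactSpace G] (g : G) {V : Set G} (hV : V ∈ 𝓝 1) : 0 < lowerDensity {n | g ^ n ∈ V} := by
  classical
  obtain ⟨W, hW, hWV⟩ := exists_nhds_split_inv hV
  have interior_nonempty : (interior W⁻¹).Nonempty :=
    ⟨1, mem_interior_iff_mem_nhds.2 (inv_mem_nhds_one G hW)⟩
  obtain ⟨t, ht⟩ := compact_covered_by_mul_left_translates isCompact_univ interior_nonempty
  have covered (n : ℕ) : ∃ h ∈ t, h * g ^ n ∈ W⁻¹ := by
    simpa only [Set.mem_iUnion, Set.mem_preimage, exists_prop] using ht (Set.mem_univ (g ^ n))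
  choose h ht hW using covered
  have t_nonempty : t.Nonempty := ⟨h 0, ht 0⟩
  have t_card_pos : (0 : ℝ) < t.card := mod_cast t_nonempty.card_pos
  have sub_mem (m n : ℕ) (hmn : m ≤ n) (heq : h m = h n) : n - m ∈ {n | g ^ n ∈ V} := by
    have quotient_mem := hWV _ (hW m) _ (hW n)
    rw [heq, ← pow_mul_pow_sub g hmn] at quotient_mem
    simpa using quotient_mem
  refine (inv_pos.2 t_card_pos).trans_le (le_lowerDensity (Eventually.of_forall fun N => ?_))
  obtain ⟨h₀, -, hcard⟩ := Finset.exists_le_card_fiber_of_nsmul_le_card_of_maps_to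
    (s := Finset.range N) (b := (t.card : ℝ)⁻¹ * N) (fun n _ => ht n) t_nonempty
    (by rw [nsmul_eq_mul, mul_inv_cancel_left₀ t_card_pos.ne', Finset.card_range])
  refine hcard.trans (mod_cast card_le_count_of_forall_sub_mem (Finset.filter_subset _ _) ?_)
  intro m hm n hn hmn
  exact sub_mem m n hmn ((Finset.mem_filter.1 hm).2.trans (Finset.mem_filter.1 hn).2.symm)

/-- The trace on `ℕ` of the neighbourhood filter of `0` in the Bohr compactification of `ℤ`: it is
generated by the sets of `n` such that `c ^ n` is close to `1` for finitely many prescribed points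
`c` of the circle. The Bohr compactification is replaced by the product of one circle for each
`c : Circle`, in which it embeds. -/
noncomputable def bohrFilter : Filter ℕ :=
  comap (fun n : ℕ => (id : Circle → Circle) ^ n) (𝓝 1)

lemma lowerDensity_pos_of_mem_bohrFilter {A : Set ℕ} (hA : A ∈ bohrFilter) :
    0 < lowerDensity A := by
  obtain ⟨V, hV, hVA⟩ := mem_comap.1 hA
  exact (lowerDensity_pow_mem_pos _ hV).trans_le (lowerDensity_mono hVA)

lemma exists_mem_bohrFilter_forall_add_mem {A : Set ℕ} (hA : A ∈ bohrFilter) :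
    ∃ B ∈ bohrFilter, ∀ n, ∀ s ∈ B, n + s ∈ B → n ∈ A := by
  obtain ⟨V, hV, hVA⟩ := mem_comap.1 hA
  obtain ⟨W, hW, hWV⟩ := exists_nhds_split_inv hV
  refine ⟨_, preimage_mem_comap hW, fun n s hs hns => hVA ?_⟩
  simpa [pow_add] using hWV _ hns _ hs

lemma tendsto_pow_bohrFilter (c : Circle) : Tendsto (c ^ ·) bohrFilter (𝓝 1) :=
  ((continuous_apply (A := fun _ => Circle) c).tendsto 1).comp tendsto_comap

end Bohr

section ExponentialSums

open scoped Classical in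
lemma tendsto_cesaro_pow {c : ℂ} (hc : ‖c‖ ≤ 1) :
    Tendsto (fun M : ℕ => (∑ n ∈ Finset.range M, c ^ n) / M) atTop
      (𝓝 (if c = 1 then 1 else 0)) := by
  split_ifs with h
  · refine tendsto_const_nhds.congr' ?_
    filter_upwards [eventually_ne_atTop 0] with M hM
    simp [h, hM]
  · refine squeeze_zero_norm (fun M => ?_) (tendsto_const_div_atTop_nhds_zero_nat (2 / ‖c - 1‖))
    rw [geom_sum_eq h, norm_div, norm_div, Complex.norm_natCast]
    gcongr
    calc ‖c ^ M - 1‖ ≤ ‖c‖ ^ M + ‖(1 : ℂ)‖ := (norm_sub_le _ _).trans_eq (by rw [norm_pow])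
      _ ≤ 1 + 1 := by gcongr; exacts [pow_le_one₀ (norm_nonneg c) hc, norm_one.le]
      _ = 2 := one_add_one_eq_two

lemma norm_sq_sum_pow_eq (S : Finset Circle) (n : ℕ) :
    ((‖∑ c ∈ S, (c : ℂ) ^ n‖ ^ 2 : ℝ) : ℂ) = ∑ b ∈ S, ∑ c ∈ S, ((b / c : Circle) : ℂ) ^ n := by
  push_cast
  rw [← Complex.mul_conj', map_sum, Finset.sum_mul_sum]
  simp only [map_pow, ← mul_pow, ← Circle.coe_inv_eq_conj, Circle.coe_inv,
    div_eq_mul_inv]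

lemma tendsto_cesaro_norm_sq_sum_pow (S : Finset Circle) :
    Tendsto (fun M : ℕ => (∑ n ∈ Finset.range M, ‖∑ c ∈ S, (c : ℂ) ^ n‖ ^ 2) / M) atTop
      (𝓝 (S.card : ℝ)) := by
  classical
  have tendsto_expansion : Tendsto (fun M : ℕ => ∑ b ∈ S, ∑ c ∈ S,
      (∑ n ∈ Finset.range M, ((b / c : Circle) : ℂ) ^ n) / M) atTop
      (𝓝 (∑ b ∈ S, ∑ c ∈ S, if ((b / c : Circle) : ℂ) = 1 then 1 else 0)) :=
    tendsto_finsetSum _ fun b _ => tendsto_finsetSum _ fun c _ =>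
      tendsto_cesaro_pow (Circle.norm_coe (b / c)).le
  have limit_eq : (∑ b ∈ S, ∑ c ∈ S, if ((b / c : Circle) : ℂ) = 1 then (1 : ℂ) else 0) =
      (S.card : ℝ) := by
    simp only [Circle.coe_eq_one, div_eq_one, Finset.sum_ite_eq, Finset.sum_ite_mem]
    simp
  rw [limit_eq] at tendsto_expansion
  rw [← tendsto_ofReal_iff]
  refine tendsto_expansion.congr fun M => ?_
  simp only [← Finset.sum_div, Finset.sum_comm (s := S) (t := Finset.range M)]
  rw [Complex.ofReal_div, Complex.ofReal_sum, Complex.ofReal_natCast]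
  simp only [norm_sq_sum_pow_eq]

lemma exists_finset_eventually_sum_norm_le {Λ : Set Circle} (hΛ : Λ.Infinite) {ε : ℝ}
    (hε : 0 < ε) :
    ∃ S : Finset Circle, S.Nonempty ∧ ↑S ⊆ Λ ∧ ∀ᶠ M : ℕ in atTop,
      ∑ n ∈ Finset.range M, ‖∑ c ∈ S, (c : ℂ) ^ n‖ ≤ ε * S.card * M := by
  obtain ⟨k, hk⟩ := exists_nat_one_div_lt (sq_pos_of_pos hε)
  obtain ⟨S, hSΛ, hS⟩ := hΛ.exists_subset_card_eq (k + 1)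
  have card_pos : 0 < S.card := by lia
  refine ⟨S, Finset.card_pos.1 card_pos, hSΛ, ?_⟩
  have card_lt : (S.card : ℝ) < ε ^ 2 * S.card ^ 2 := by
    rw [hS]
    push_cast
    rw [div_lt_iff₀ (by positivity)] at hk
    nlinarith
  filter_upwards [(tendsto_cesaro_norm_sq_sum_pow S).eventually_lt_const card_lt,
    eventually_gt_atTop 0] with M hM hM_pos
  rw [div_lt_iff₀ (mod_cast hM_pos)] at hM
  refine le_of_sq_le_sq ?_ (by positivity)
  calc (∑ n ∈ Finset.range M, ‖∑ c ∈ S, (c : ℂ) ^ n‖) ^ 2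
      ≤ M * ∑ n ∈ Finset.range M, ‖∑ c ∈ S, (c : ℂ) ^ n‖ ^ 2 := by
        simpa using sq_sum_le_card_mul_sum_sq (s := Finset.range M)
          (f := fun n => ‖∑ c ∈ S, (c : ℂ) ^ n‖)
    _ ≤ M * (ε ^ 2 * S.card ^ 2 * M) := by gcongr
    _ = (ε * S.card * M) ^ 2 := by ring

end ExponentialSums

section Operator

variable {X : Type*} [NormedAddCommGroup X] [NormedSpace ℂ X] {T : X →L[ℂ] X}

/-- The linear span of the eigenvectors of `T` associated to unimodular eigenvalues. -/
def unimodularEigenspan (T : X →L[ℂ] X) : Submodule ℂ X :=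
  Submodule.span ℂ {v | ∃ c : Circle, T v = c • v}

lemma mem_unimodularEigenspan {v : X} {c : Circle} (hv : T v = c • v) :
    v ∈ unimodularEigenspan T :=
  Submodule.subset_span ⟨c, hv⟩

lemma pow_apply_eq_pow_smul {v : X} {c : Circle} (hv : T v = c • v) (n : ℕ) :
    (T ^ n) v = c ^ n • v := by
  induction n with
  | zero => simp
  | succ n ih =>
    rw [pow_succ, mul_apply_eq_comp, hv, Circle.smul_def, map_smul, ih, ← Circle.smul_def,
      smul_smul, pow_succ']

lemma pow_apply_mem_unimodularEigenspan {y : X} (hy : y ∈ unimodularEigenspan T) (s : ℕ) :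
    (T ^ s) y ∈ unimodularEigenspan T := by
  refine (Submodule.span_le (p := (unimodularEigenspan T).comap (T ^ s).toLinearMap)).2 ?_ hy
  rintro v ⟨c, hv⟩
  change (T ^ s) v ∈ unimodularEigenspan T
  rw [pow_apply_eq_pow_smul hv, Circle.smul_def]
  exact Submodule.smul_mem _ _ (mem_unimodularEigenspan hv)

lemma tendsto_pow_apply_bohrFilter {y : X} (hy : y ∈ unimodularEigenspan T) :
    Tendsto (fun n => (T ^ n) y) bohrFilter (𝓝 y) := by
  induction hy using Submodule.span_induction with
  | mem v hv =>
    obtain ⟨c, hv⟩ := hv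
    simpa only [pow_apply_eq_pow_smul hv, one_smul] using (tendsto_pow_bohrFilter c).smul_const v
  | zero => simpa only [map_zero] using tendsto_const_nhds
  | add y z _ _ hy hz => simpa only [map_add] using hy.add hz
  | smul a y _ hy => simpa only [map_smul] using hy.const_smul a

lemma sum_norm_pow_apply_add_le (T : X →L[ℂ] X) (z z' : X) (M : ℕ) :
    ∑ n ∈ Finset.range M, ‖(T ^ n) (z + z')‖ ≤
      ∑ n ∈ Finset.range M, ‖(T ^ n) z‖ + ∑ n ∈ Finset.range M, ‖(T ^ n) z'‖ := by
  rw [← Finset.sum_add_distrib]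
  gcongr with n
  rw [map_add]
  exact norm_add_le _ _

/-- The vectors that can be approximated by elements of `unimodularEigenspan T` whose orbits are
arbitrarily small on average. -/
def meanNullApproximable (T : X →L[ℂ] X) : Submodule ℂ X where
  carrier := {w | ∀ ε > 0, ∃ z ∈ unimodularEigenspan T, ‖z - w‖ < ε ∧
    ∀ᶠ M : ℕ in atTop, ∑ n ∈ Finset.range M, ‖(T ^ n) z‖ ≤ ε * M}
  zero_mem' ε hε := by
    refine ⟨0, zero_mem _, by simpa using hε, Eventually.of_forall fun M => ?_⟩
    simpa only [map_zero, norm_zero, Finset.sum_const_zero] using by positivity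
  add_mem' {w w'} hw hw' ε hε := by
    obtain ⟨z, hz, hzw, hmean⟩ := hw (ε / 2) (half_pos hε)
    obtain ⟨z', hz', hzw', hmean'⟩ := hw' (ε / 2) (half_pos hε)
    refine ⟨z + z', add_mem hz hz', ?_, ?_⟩
    · rw [add_sub_add_comm]
      linarith [norm_add_le (z - w) (z' - w')]
    · filter_upwards [hmean, hmean'] with M hM hM'
      linarith [sum_norm_pow_apply_add_le T z z' M]
  smul_mem' a w hw ε hε := by
    obtain ⟨δ, hδ, hδε⟩ : ∃ δ > 0, ‖a‖ * δ < ε := exists_pos_mul_lt hε ‖a‖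
    obtain ⟨z, hz, hzw, hmean⟩ := hw δ hδ
    refine ⟨a • z, Submodule.smul_mem _ a hz, ?_, ?_⟩
    · rw [← smul_sub, norm_smul]
      exact (mul_le_mul_of_nonneg_left hzw.le (norm_nonneg a)).trans_lt hδε
    · filter_upwards [hmean] with M hM
      calc ∑ n ∈ Finset.range M, ‖(T ^ n) (a • z)‖ = ‖a‖ * ∑ n ∈ Finset.range M, ‖(T ^ n) z‖ := by
            simp only [map_smul, norm_smul, Finset.mul_sum]
        _ ≤ ‖a‖ * (δ * M) := by gcongr
        _ ≤ ε * M := by rw [← mul_assoc]; gcongr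

lemma isClosed_meanNullApproximable (T : X →L[ℂ] X) :
    IsClosed (meanNullApproximable T : Set X) := by
  refine isClosed_of_closure_subset fun w hw ε hε => ?_
  obtain ⟨w', hw', hdist⟩ := Metric.mem_closure_iff.1 hw (ε / 2) (half_pos hε)
  obtain ⟨z, hz, hzw', hmean⟩ := hw' (ε / 2) (half_pos hε)
  refine ⟨z, hz, ?_, ?_⟩
  · rw [dist_comm, dist_eq_norm] at hdist
    linarith [norm_sub_le_norm_sub_add_norm_sub z w' w]
  · filter_upwards [hmean] with M hM
    exact hM.trans (by gcongr; exact half_le_self hε.le)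

/-- The vectors all of whose neighbourhoods contain eigenvectors of `T` for infinitely many distinct
unimodular eigenvalues. -/
def unimodularEigenvectorLimits (T : X →L[ℂ] X) : Set X :=
  {x | ∀ U ∈ 𝓝 x, {c : Circle | ∃ v ∈ U, v ≠ 0 ∧ T v = c • v}.Infinite}

lemma norm_inv_card_smul_sum_smul_sub_le {S : Finset Circle} (hS : S.Nonempty) {v : Circle → X}
    {x : X} {δ : ℝ} (hv : ∀ c ∈ S, ‖v c - x‖ ≤ δ) (n : ℕ) :
    ‖(S.card : ℂ)⁻¹ • ∑ c ∈ S, c ^ n • v c - ((S.card : ℂ)⁻¹ * ∑ c ∈ S, (c : ℂ) ^ n) • x‖ ≤ δ := by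
  have card_pos : (0 : ℝ) < S.card := mod_cast hS.card_pos
  have eq_sum : (S.card : ℂ)⁻¹ • ∑ c ∈ S, c ^ n • v c -
      ((S.card : ℂ)⁻¹ * ∑ c ∈ S, (c : ℂ) ^ n) • x =
      (S.card : ℂ)⁻¹ • ∑ c ∈ S, c ^ n • (v c - x) := by
    simp only [smul_sub, Finset.sum_sub_distrib, mul_smul, Finset.sum_smul, Circle.smul_def,
      Circle.coe_pow]
  rw [eq_sum, norm_smul, norm_inv, Complex.norm_natCast, inv_mul_le_iff₀ card_pos]
  calc ‖∑ c ∈ S, c ^ n • (v c - x)‖ ≤ ∑ _c ∈ S, δ :=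
        norm_sum_le_of_le S fun c hc => by rw [Circle.norm_smul]; exact hv c hc
    _ = S.card * δ := by rw [Finset.sum_const, nsmul_eq_mul]

lemma norm_pow_apply_inv_card_smul_sum_le {S : Finset Circle} (hS : S.Nonempty) {v : Circle → X}
    {x : X} {δ : ℝ} (hv : ∀ c ∈ S, ‖v c - x‖ ≤ δ) (hTv : ∀ c ∈ S, T (v c) = c • v c) (n : ℕ) :
    ‖(T ^ n) ((S.card : ℂ)⁻¹ • ∑ c ∈ S, v c)‖ ≤
      δ + (S.card : ℝ)⁻¹ * ‖x‖ * ‖∑ c ∈ S, (c : ℂ) ^ n‖ := by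
  have pow_apply : (T ^ n) ((S.card : ℂ)⁻¹ • ∑ c ∈ S, v c) =
      (S.card : ℂ)⁻¹ • ∑ c ∈ S, c ^ n • v c := by
    rw [map_smul, map_sum]
    exact congrArg _ (Finset.sum_congr rfl fun c hc => pow_apply_eq_pow_smul (hTv c hc) n)
  rw [pow_apply]
  refine (norm_le_norm_sub_add _ _).trans
    (add_le_add (norm_inv_card_smul_sum_smul_sub_le hS hv n) (le_of_eq ?_))
  rw [norm_smul, norm_mul, norm_inv, Complex.norm_natCast]
  ring

lemma unimodularEigenvectorLimits_subset_meanNullApproximable (T : X →L[ℂ] X) :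
    unimodularEigenvectorLimits T ⊆ meanNullApproximable T := by
  intro x hx ε hε
  obtain ⟨η, hη, hηε⟩ : ∃ η > 0, ‖x‖ * η < ε / 2 := exists_pos_mul_lt (half_pos hε) ‖x‖
  obtain ⟨S, hS, hSx, hmean⟩ := exists_finset_eventually_sum_norm_le
    (hx _ (Metric.ball_mem_nhds x (half_pos hε))) hη
  choose! v hv _ hTv using fun c (hc : c ∈ S) => hSx hc
  have v_near (c : Circle) (hc : c ∈ S) : ‖v c - x‖ ≤ ε / 2 := (mem_ball_iff_norm.1 (hv c hc)).le
  refine ⟨(S.card : ℂ)⁻¹ • ∑ c ∈ S, v c, Submodule.smul_mem _ _ (sum_mem fun c hc =>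
    mem_unimodularEigenspan (hTv c hc)), ?_, ?_⟩
  · refine lt_of_le_of_lt ?_ (half_lt_self hε)
    have card_ne_zero : (S.card : ℂ) ≠ 0 := mod_cast hS.card_pos.ne'
    simpa [card_ne_zero] using norm_inv_card_smul_sum_smul_sub_le hS v_near 0
  · filter_upwards [hmean] with M hM
    calc ∑ n ∈ Finset.range M, ‖(T ^ n) ((S.card : ℂ)⁻¹ • ∑ c ∈ S, v c)‖
        ≤ ∑ n ∈ Finset.range M, (ε / 2 + (S.card : ℝ)⁻¹ * ‖x‖ * ‖∑ c ∈ S, (c : ℂ) ^ n‖) :=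
          Finset.sum_le_sum fun n _ => norm_pow_apply_inv_card_smul_sum_le hS v_near hTv n
      _ = M * (ε / 2) +
          (S.card : ℝ)⁻¹ * ‖x‖ * ∑ n ∈ Finset.range M, ‖∑ c ∈ S, (c : ℂ) ^ n‖ := by
          rw [Finset.sum_add_distrib, Finset.sum_const, Finset.card_range, nsmul_eq_mul,
            Finset.mul_sum]
      _ ≤ M * (ε / 2) + (S.card : ℝ)⁻¹ * ‖x‖ * (η * S.card * M) := by gcongr
      _ = M * (ε / 2) + ‖x‖ * η * M := by field_simp
      _ ≤ M * (ε / 2) + ε / 2 * M := by gcongr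
      _ = ε * M := by ring

lemma meanNullApproximable_eq_top
    (h : Dense (Submodule.span ℂ (unimodularEigenvectorLimits T) : Set X)) :
    meanNullApproximable T = ⊤ := by
  rw [eq_top_iff, ← Submodule.dense_iff_topologicalClosure_eq_top.1 h]
  exact Submodule.topologicalClosure_minimal _
    (Submodule.span_le.2 (unimodularEigenvectorLimits_subset_meanNullApproximable T))
    (isClosed_meanNullApproximable T)

/-- All averages of the norms along the orbit of `z` under `T` are at most `ε`. -/
def OrbitMeanLE (T : X →L[ℂ] X) (ε : ℝ) (z : X) : Prop :=
  ∀ M : ℕ, ∑ n ∈ Finset.range M, ‖(T ^ n) z‖ ≤ ε * M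

namespace OrbitMeanLE

lemma mono {ε ε' : ℝ} {z : X} (hz : OrbitMeanLE T ε z) (h : ε ≤ ε') : OrbitMeanLE T ε' z :=
  fun M => (hz M).trans (by gcongr)

lemma add {ε ε' : ℝ} {z z' : X} (hz : OrbitMeanLE T ε z) (hz' : OrbitMeanLE T ε' z') :
    OrbitMeanLE T (ε + ε') (z + z') := fun M => by
  rw [add_mul]
  exact (sum_norm_pow_apply_add_le T z z' M).trans (add_le_add (hz M) (hz' M))

lemma norm_le {ε : ℝ} {z : X} (hz : OrbitMeanLE T ε z) : ‖z‖ ≤ ε := by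
  simpa using hz 1

lemma of_tendsto {ι : Type*} {l : Filter ι} [l.NeBot] {ε : ℝ} {f : ι → X} {z : X}
    (hf : Tendsto f l (𝓝 z)) (h : ∀ i, OrbitMeanLE T ε (f i)) : OrbitMeanLE T ε z := fun M =>
  le_of_tendsto' (tendsto_finsetSum _ fun n _ => (((T ^ n).continuous.tendsto z).comp hf).norm)
    fun i => h i M

lemma sub_of_halving {v : ℕ → X} {e : ℕ → ℝ}
    (hv : ∀ b, OrbitMeanLE T (e b) (v (b + 1) - v b)) (he : ∀ b, e (b + 1) ≤ e b / 2) (b k : ℕ) :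
    OrbitMeanLE T (2 * e b - 2 * e (b + k)) (v (b + k) - v b) := by
  induction k with
  | zero => simp [OrbitMeanLE]
  | succ k ih =>
    have := (hv (b + k)).add ih
    rw [sub_add_sub_cancel] at this
    exact this.mono (by linarith [he (b + k), show e (b + (k + 1)) = e (b + k + 1) from rfl])

end OrbitMeanLE

lemma le_mul_one_half_pow {e : ℕ → ℝ} (he : ∀ b, e (b + 1) ≤ e b / 2) (b : ℕ) :
    e b ≤ e 0 * (1 / 2) ^ b := by
  induction b with
  | zero => simp
  | succ b ih =>
    rw [pow_succ]
    linarith [he b]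

lemma exists_forall_orbitMeanLE_sub [CompleteSpace X] {v : ℕ → X} {e : ℕ → ℝ}
    (hv : ∀ b, OrbitMeanLE T (e b) (v (b + 1) - v b)) (he : ∀ b, e (b + 1) ≤ e b / 2) :
    ∃ x, ∀ b, OrbitMeanLE T (2 * e b) (x - v b) := by
  have cauchy : CauchySeq v := by
    refine cauchySeq_of_le_geometric (1 / 2) (e 0) one_half_lt_one fun b => ?_
    rw [dist_comm, dist_eq_norm]
    exact (hv b).norm_le.trans (le_mul_one_half_pow he b)
  obtain ⟨x, hx⟩ := cauchySeq_tendsto_of_complete cauchy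
  refine ⟨x, fun b => ?_⟩
  have tendsto_sub : Tendsto (fun k => v (b + k) - v b) atTop (𝓝 (x - v b)) :=
    (hx.comp (tendsto_atTop_mono (fun k => k.le_add_left b) tendsto_id)).sub_const _
  refine OrbitMeanLE.of_tendsto tendsto_sub fun k =>
    (OrbitMeanLE.sub_of_halving hv he b k).mono ?_
  have e_nonneg : 0 ≤ e (b + k) := (norm_nonneg _).trans (hv (b + k)).norm_le
  linarith

lemma exists_orbitMeanLE_lowerDensity_pos (hT : meanNullApproximable T = ⊤) {v : X}
    (hv : v ∈ unimodularEigenspan T) (u : X) {ε : ℝ} (hε : 0 < ε) :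
    ∃ z ∈ unimodularEigenspan T, OrbitMeanLE T ε z ∧
      0 < lowerDensity {n | ‖(T ^ n) (v + z) - u‖ < ε} := by
  have return_mem {y : X} (hy : y ∈ unimodularEigenspan T) :
      {n | ‖(T ^ n) y - y‖ < ε / 3} ∈ bohrFilter := by
    simp only [← dist_eq_norm]
    exact Metric.tendsto_nhds.1 (tendsto_pow_apply_bohrFilter hy) (ε / 3) (by positivity)
  obtain ⟨B, hB, hBv⟩ := exists_mem_bohrFilter_forall_add_mem (return_mem hv)
  have B_pos := lowerDensity_pos_of_mem_bohrFilter hB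
  have target_mem : u - v ∈ meanNullApproximable T := hT ▸ Submodule.mem_top
  obtain ⟨z, hz, hzu, hmean⟩ := target_mem (min (ε / 3) (ε * lowerDensity B / 2)) (by positivity)
  obtain ⟨s, hsB, hs⟩ := exists_mem_forall_sum_le (fun n => norm_nonneg ((T ^ n) z)) hε
    ((min_le_right _ _).trans_lt (half_lt_self (mul_pos hε B_pos))) hmean
  have shift (n : ℕ) : (T ^ n) ((T ^ s) z) = (T ^ (s + n)) z := by
    rw [add_comm, pow_add, mul_apply_eq_comp]
  refine ⟨(T ^ s) z, pow_apply_mem_unimodularEigenspan hz s, fun M => ?_, ?_⟩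
  · simpa only [shift] using hs M
  have return_pos := lowerDensity_pos_of_mem_bohrFilter (inter_mem hB (return_mem hz))
  refine return_pos.trans_le ((lowerDensity_le_lowerDensity_preimage_add _ s).trans
    (lowerDensity_mono ?_))
  rintro n ⟨hnB, hnz : ‖(T ^ (n + s)) z - z‖ < ε / 3⟩
  have hnv : ‖(T ^ n) v - v‖ < ε / 3 := hBv n s hsB hnB
  have hzu' : ‖z - (u - v)‖ < ε / 3 := hzu.trans_le (min_le_left _ _)
  calc ‖(T ^ n) (v + (T ^ s) z) - u‖
      = ‖((T ^ n) v - v) + ((T ^ (n + s)) z - z) + (z - (u - v))‖ := by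
        rw [map_add, shift, add_comm s n]
        congr 1
        abel
    _ ≤ ‖(T ^ n) v - v‖ + ‖(T ^ (n + s)) z - z‖ + ‖z - (u - v)‖ := norm_add₃_le
    _ < ε := by linarith

lemma lowerDensity_pos_of_orbitMeanLE_sub {v x u : X} {ε δ : ℝ} (hε : 0 < ε)
    (hδ : δ < ε * lowerDensity {n | ‖(T ^ n) v - u‖ < ε}) (hx : OrbitMeanLE T δ (x - v)) :
    0 < lowerDensity {n | ‖(T ^ n) x - u‖ < 2 * ε} := by
  refine (sub_pos.2 ((div_lt_iff₀' hε).2 hδ)).trans_le (lowerDensity_sub_div_le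
    (fun n => norm_nonneg ((T ^ n) (x - v))) hε (Eventually.of_forall hx) fun n hn hnx => ?_)
  rw [map_sub] at hnx
  have hn' : ‖(T ^ n) v - u‖ < ε := hn
  change ‖(T ^ n) x - u‖ < 2 * ε
  linarith [norm_sub_le_norm_sub_add_norm_sub ((T ^ n) x) ((T ^ n) v) u]

lemma exists_halving_seq (hT : meanNullApproximable T = ⊤) (u : ℕ → X) :
    ∃ (v : ℕ → X) (e : ℕ → ℝ), e 0 = 1 ∧ (∀ b, 0 < e b) ∧ (∀ b, e (b + 1) ≤ e b / 2) ∧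
      (∀ b, OrbitMeanLE T (e b) (v (b + 1) - v b)) ∧
      ∀ b, 2 * e (b + 1) < e b * lowerDensity {n | ‖(T ^ n) (v (b + 1)) - u b‖ < e b} := by
  have exists_next (b : ℕ) (p : {p : X × ℝ // p.1 ∈ unimodularEigenspan T ∧ 0 < p.2}) :
      ∃ q : {q : X × ℝ // q.1 ∈ unimodularEigenspan T ∧ 0 < q.2}, q.1.2 ≤ p.1.2 / 2 ∧
        OrbitMeanLE T p.1.2 (q.1.1 - p.1.1) ∧
        2 * q.1.2 < p.1.2 * lowerDensity {n | ‖(T ^ n) q.1.1 - u b‖ < p.1.2} := by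
    obtain ⟨⟨v, e⟩, hv, he : 0 < e⟩ := p
    obtain ⟨z, hz, hmean, hd⟩ := exists_orbitMeanLE_lowerDensity_pos hT hv (u b) he
    set d := lowerDensity {n | ‖(T ^ n) (v + z) - u b‖ < e}
    have ed_pos : 0 < e * d := mul_pos he hd
    refine ⟨⟨(v + z, min (e / 2) (e * d / 4)), add_mem hv hz, by positivity⟩, min_le_left _ _,
      by simpa using hmean, ?_⟩
    linarith [min_le_right (e / 2) (e * d / 4)]
  choose next hhalf hmean hdens using exists_next
  let p (b : ℕ) : {p : X × ℝ // p.1 ∈ unimodularEigenspan T ∧ 0 < p.2} :=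
    Nat.rec ⟨(0, 1), zero_mem _, one_pos⟩ next b
  exact ⟨fun b => (p b).1.1, fun b => (p b).1.2, rfl, fun b => (p b).2.2,
    fun b => hhalf b (p b), fun b => hmean b (p b), fun b => hdens b (p b)⟩

lemma freqHCVector_of_forall_lowerDensity_pos {w : ℕ → X} (hw : DenseRange w) {e : ℕ → ℝ}
    (he : Tendsto e atTop (𝓝 0)) {x : X}
    (hx : ∀ b, 0 < lowerDensity {n | ‖(T ^ n) x - w b.unpair.1‖ < e b}) : FreqHCVector T x := by
  intro U hU hne
  obtain ⟨k, hk⟩ := hw.exists_mem_open hU hne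
  obtain ⟨r, hr, hball⟩ := Metric.isOpen_iff.1 hU _ hk
  obtain ⟨j, hj⟩ := eventually_atTop.1 (he.eventually_lt_const hr)
  refine (hx (Nat.pair k j)).trans_le (lowerDensity_mono fun n hn => hball ?_)
  rw [Nat.unpair_pair] at hn
  exact mem_ball_iff_norm.2 (lt_trans hn (hj _ (Nat.right_le_pair k j)))

lemma frequentlyHypercyclic_of_meanNullApproximable_eq_top [CompleteSpace X]
    [TopologicalSpace.SeparableSpace X] (hT : meanNullApproximable T = ⊤) :
    FrequentlyHypercyclic T := by
  obtain ⟨v, e, e_zero, e_pos, e_halving, hv, hdens⟩ :=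
    exists_halving_seq hT fun b => TopologicalSpace.denseSeq X b.unpair.1
  obtain ⟨x, hx⟩ := exists_forall_orbitMeanLE_sub hv e_halving
  have tendsto_e : Tendsto (fun b => 2 * e b) atTop (𝓝 0) := by
    have tendsto_pow : Tendsto (fun b : ℕ => (1 / 2 : ℝ) ^ b) atTop (𝓝 0) :=
      tendsto_pow_atTop_nhds_zero_of_lt_one one_half_pos.le one_half_lt_one
    rw [← mul_zero (2 : ℝ)]
    refine (squeeze_zero (fun b => (e_pos b).le) (fun b => ?_) tendsto_pow).const_mul 2
    simpa only [e_zero, one_mul] using le_mul_one_half_pow e_halving b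
  exact ⟨x, freqHCVector_of_forall_lowerDensity_pos (TopologicalSpace.denseRange_denseSeq X)
    tendsto_e fun b => lowerDensity_pos_of_orbitMeanLE_sub (e_pos b) (hdens b) (hx (b + 1))⟩

lemma range_subset_unimodularEigenvectorLimits {ι : Type*} {x : ι → X} {lam : ι → ℂ}
    (heig : ∀ i, T (x i) = lam i • x i) (hmod : ∀ i, ‖lam i‖ = 1) (hx : ∀ i, x i ≠ 0)
    (hclosure : ∀ F : Set ℂ, F.Finite →
      F ⊆ {c : ℂ | ‖c‖ = 1 ∧ ∃ v : X, v ≠ 0 ∧ T v = c • v} →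
      Set.range x ⊆ closure (x '' {i | lam i ∉ F})) :
    Set.range x ⊆ unimodularEigenvectorLimits T := by
  intro y hy U hU hfin
  have coe_image_subset : ((↑) : Circle → ℂ) '' {c : Circle | ∃ v ∈ U, v ≠ 0 ∧ T v = c • v} ⊆
      {c : ℂ | ‖c‖ = 1 ∧ ∃ v : X, v ≠ 0 ∧ T v = c • v} := by
    rintro _ ⟨c, ⟨v, -, hv, hTv⟩, rfl⟩
    exact ⟨Circle.norm_coe c, v, hv, hTv⟩
  obtain ⟨_, hkU, k, hk, rfl⟩ := mem_closure_iff_nhds.1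
    (hclosure _ (hfin.image (↑)) coe_image_subset hy) U hU
  exact hk ⟨⟨lam k, mem_sphere_zero_iff_norm.2 (hmod k)⟩, ⟨x k, hkU, hx k, heig k⟩, rfl⟩

end Operator

theorem hypercyclic_and_assumptionH_implies_frequentlyHypercyclic_general
    {X : Type*} [NormedAddCommGroup X] [NormedSpace ℂ X] [CompleteSpace X]
    [TopologicalSpace.SeparableSpace X] (T : X →L[ℂ] X)
    (hT : Dense (Submodule.span ℂ (unimodularEigenvectorLimits T) : Set X)) :
    FrequentlyHypercyclic T :=
  frequentlyHypercyclic_of_meanNullApproximable_eq_top (meanNullApproximable_eq_top hT)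

/-- If `T` is a bounded hypercyclic operator on a complex separable
infinite-dimensional Banach space satisfying assumption (H), then `T` is frequently
hypercyclic. -/
theorem hypercyclic_and_assumptionH_implies_frequentlyHypercyclic
    {X : Type*} [NormedAddCommGroup X] [NormedSpace ℂ X] [CompleteSpace X]
    [TopologicalSpace.SeparableSpace X] (hdim : ¬ FiniteDimensional ℂ X)
    (T : X →L[ℂ] X) (hhc : Hypercyclic T)
    -- assumption (H): a sequence of unit eigenvectors `x n` with unimodular
    -- eigenvalues `lam n = exp (2 i π (θ n))`, `θ n ∈ (0, 1]`.
    (x : ℕ → X) (lam : ℕ → ℂ) (θ : ℕ → ℝ)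
    (heig : ∀ n, T (x n) = lam n • x n)
    (hmod : ∀ n, ‖lam n‖ = 1)
    (hθ : ∀ n, θ n ∈ Set.Ioc (0 : ℝ) 1)
    (hexp : ∀ n, lam n = Complex.exp ((2 * Real.pi * θ n : ℝ) * Complex.I))
    (hnorm : ∀ n, ‖x n‖ = 1)
    -- (1): any finite family of indices carrying distinct eigenvalues yields
    -- ℚ-linearly independent irrational arguments.
    (h1 : ∀ s : Finset ℕ, Set.InjOn lam ↑s →
      (∀ n ∈ s, Irrational (θ n)) ∧ LinearIndependent ℚ (fun n : s => θ (n : ℕ)))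
    -- (2): the eigenvectors span a dense subspace.
    (h2 : Dense (Submodule.span ℂ (Set.range x) : Set X))
    -- (3): for any finite set `F` of unimodular eigenvalues of `T`, the closure of
    -- `{x n : n ≥ 1}` equals the closure of `{x n : lam n ∉ F}`.
    (h3 : ∀ F : Set ℂ, F.Finite →
      F ⊆ {c : ℂ | ‖c‖ = 1 ∧ ∃ v : X, v ≠ 0 ∧ T v = c • v} →
      closure (Set.range x) = closure (x '' {k : ℕ | lam k ∉ F})) :
    FrequentlyHypercyclic T :=
  hypercyclic_and_assumptionH_implies_frequentlyHypercyclic_general T <| h2.mono <|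
    Submodule.span_mono <| range_subset_unimodularEigenvectorLimits heig hmod
      (fun n => norm_ne_zero_iff.1 (by simp [hnorm n]))
      fun F hF hFT => h3 F hF hFT ▸ subset_closure
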